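/- arXiv:2306.04230 — 2 statements merged into one kernel-verified Lean document; each statement's English description precedes it below -/
import Mathlib

section
/- For the sequence {x_n} generated by Algorithm 1, one has lim_{n→∞} ‖x_{n+1} − x_n‖/λ_n = 0 and lim_{n→∞} ‖x_{n+1} − x_n‖ = 0. -/
open Filter Topology

/-!
At the scale `α (n+1) * lam (n+1)` every parameter perturbation is negligible: (C2), (C3), (C5) and
(C7) say exactly that `1 - lam (n+1) / lam n`, `α n - α (n+1)`, `θ n` and `lam (n+1) * β n` are
`o(α (n+1) * lam (n+1))`. A gradient step for `h_i` is nonexpansive by the Baillon–Haddad theorem,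
and so are the proximal map and `T_i`; hence the `i`-th inner step contracts successive differences
by the factor `1 - α (n+1)` of the anchoring, up to such an error. Over a full cycle this gives
`‖x (n+2) - x (n+1)‖ ≤ (1 - α (n+1)) * ‖x (n+1) - x n‖ + o(α (n+1) * lam (n+1))`. Dividing by
`lam (n+1)`, and absorbing the change of `lam` with (C2) once more, leaves an error `o(α (n+1))`,
which the divergence of `∑ α n` beats.
-/

open Asymptotics Finset
open scoped RealInnerProductSpace NNReal

section RealSequences

variable {a b e : ℕ → ℝ}

theorem tendsto_prod_Ico_one_sub_zero (ha0 : ∀ n, 0 ≤ a n) (ha1 : ∀ n, a n ≤ 1)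
    (ha : ¬ Summable a) (N : ℕ) :
    Tendsto (fun n => ∏ i ∈ Ico N n, (1 - a i)) atTop (𝓝 0) := by
  have hsum : Tendsto (fun n => ∑ i ∈ Ico N n, a i) atTop atTop := by
    refine (tendsto_atTop_add_const_right _ (-∑ i ∈ range N, a i)
      ((not_summable_iff_tendsto_nat_atTop_of_nonneg ha0).1 ha)).congr' ?_
    filter_upwards [eventually_ge_atTop N] with n hn
    rw [sum_Ico_eq_sub a hn, sub_eq_add_neg]
  refine squeeze_zero (fun n => prod_nonneg fun i _ => sub_nonneg.2 (ha1 i)) (fun n => ?_)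
    (Real.tendsto_exp_neg_atTop_nhds_zero.comp hsum)
  calc ∏ i ∈ Ico N n, (1 - a i) ≤ ∏ i ∈ Ico N n, Real.exp (-a i) :=
        prod_le_prod (fun i _ => sub_nonneg.2 (ha1 i)) fun i _ => Real.one_sub_le_exp_neg (a i)
    _ = Real.exp (-∑ i ∈ Ico N n, a i) := by rw [← Real.exp_sum, sum_neg_distrib]

theorem tendsto_zero_of_succ_le_one_sub_mul_add (hb : ∀ n, 0 ≤ b n) (ha0 : ∀ n, 0 ≤ a n)
    (ha1 : ∀ n, a n ≤ 1) (ha : ¬ Summable a) (he : e =o[atTop] a)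
    (hrec : ∀ᶠ n in atTop, b (n + 1) ≤ (1 - a n) * b n + e n) : Tendsto b atTop (𝓝 0) := by
  refine tendsto_order.2 ⟨fun ε hε => .of_forall fun n => hε.trans_le (hb n), fun ε hε => ?_⟩
  obtain ⟨N, hN⟩ := eventually_atTop.1 (hrec.and (he.bound (half_pos hε)))
  have hstep : ∀ n ≥ N, b (n + 1) - ε / 2 ≤ (1 - a n) * (b n - ε / 2) + 0 := fun n hn => by
    obtain ⟨hrec, hbound⟩ := hN n hn
    rw [Real.norm_of_nonneg (ha0 n)] at hbound
    linarith [Real.le_norm_self (e n)]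
  have hlim : Tendsto (fun n => (b N - ε / 2) * ∏ i ∈ Ico N n, (1 - a i)) atTop (𝓝 0) := by
    simpa using (tendsto_prod_Ico_one_sub_zero ha0 ha1 ha N).const_mul (b N - ε / 2)
  filter_upwards [eventually_ge_atTop N, hlim.eventually_lt_const (half_pos hε)] with n hn hsmall
  have hgronwall := discrete_gronwall_prod_general (u := fun n => b n - ε / 2)
    (c := fun n => 1 - a n) (b := 0) hstep (fun n _ => sub_nonneg.2 (ha1 n)) hn
  simp only [Pi.zero_apply, zero_mul, sum_const_zero, add_zero] at hgronwall
  linarith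

theorem isBigO_succ_of_antitone (ha0 : ∀ n, 0 ≤ a n) (ha : Antitone a) :
    (fun n => a (n + 1)) =O[atTop] a :=
  .of_norm_le fun n => by
    rw [Real.norm_of_nonneg (ha0 (n + 1))]
    exact ha n.le_succ

theorem isLittleO_of_tendsto_one_div_mul_abs {ι : Type*} {l : Filter ι} {a b : ι → ℝ}
    (hb : ∀ n, 0 < b n) (h : Tendsto (fun n => (1 / b n) * |a n|) l (𝓝 0)) : a =o[l] b := by
  refine isLittleO_norm_left.1 ((isLittleO_iff_tendsto fun n hn => absurd hn (hb n).ne').2 ?_)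
  exact h.congr fun n => by rw [one_div_mul_eq_div, Real.norm_eq_abs]

theorem exists_isLittleO_le_of_forall_step {M : ℕ} (hM : 1 ≤ M) {D : ℕ → ℕ → ℝ} {q g : ℕ → ℝ}
    (hD : ∀ i n, 0 ≤ D i n) (hq1 : ∀ n, q n ≤ 1)
    (hstep : ∀ i ∈ Icc 1 M, ∃ e : ℕ → ℝ, e =o[atTop] g ∧
      ∀ᶠ n in atTop, D (i + 1) n ≤ q n * D i n + e n) :
    ∃ e : ℕ → ℝ, e =o[atTop] g ∧ ∀ᶠ n in atTop, D (M + 1) n ≤ q n * D 1 n + e n := by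
  induction hM with
  | refl => exact hstep 1 (by simp)
  | @step M _ ih =>
    obtain ⟨e₁, he₁, h₁⟩ := ih fun i hi => hstep i (Icc_subset_Icc_right M.le_succ hi)
    obtain ⟨e₂, he₂, h₂⟩ := hstep (M + 1) (by simp)
    refine ⟨fun n => e₁ n + e₂ n, he₁.add he₂, ?_⟩
    filter_upwards [h₁, h₂] with n h₁ h₂
    linarith [mul_le_of_le_one_left (hD (M + 1) n) (hq1 n)]

end RealSequences

section Boundedness

variable {E F ι : Type*} [SeminormedAddCommGroup E] [SeminormedAddCommGroup F] {l : Filter ι}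

theorem isBigO_one_comp_of_lipschitzWith {A : E → F} {K : ℝ≥0} (hA : LipschitzWith K A)
    {v : ι → E} (hv : v =O[l] fun _ => (1 : ℝ)) : (fun n => A (v n)) =O[l] fun _ => (1 : ℝ) := by
  have hdiff : (fun n => A (v n) - A 0) =O[l] v :=
    .of_bound K (.of_forall fun n => by simpa using hA.norm_sub_le (v n) 0)
  simpa using (hdiff.trans hv).add (isBigO_const_const (A 0) one_ne_zero l)

theorem isBigO_one_of_norm_succ_le {v : ℕ → E} {G q : ℝ} (hq0 : 0 ≤ q) (hq1 : q < 1)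
    (h : ∀ᶠ n in atTop, ‖v (n + 1)‖ ≤ G + q * ‖v n‖) : v =O[atTop] fun _ => (1 : ℝ) := by
  obtain ⟨N, hN⟩ := eventually_atTop.1 h
  refine .of_bound (max ‖v N‖ (G / (1 - q))) (eventually_atTop.2 ⟨N, fun n hn => ?_⟩)
  rw [norm_one, mul_one]
  induction n, hn using Nat.le_induction with
  | base => exact le_max_left _ _
  | succ n hn ih =>
    set B := max ‖v N‖ (G / (1 - q))
    have hG : G ≤ B * (1 - q) := (div_le_iff₀ (sub_pos.2 hq1)).1 (le_max_right _ _)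
    calc ‖v (n + 1)‖ ≤ G + q * ‖v n‖ := hN n hn
      _ ≤ G + q * B := by gcongr
      _ ≤ B := by linarith

theorem isLittleO_norm_smul [NormedSpace ℝ E] {a g : ι → ℝ} {v : ι → E} (ha : a =o[l] g)
    (hv : v =O[l] fun _ => (1 : ℝ)) : (fun n => ‖a n • v n‖) =o[l] g := by
  simpa using (ha.smul_isBigO hv).norm_left

end Boundedness

/-- `IsProx f l v y` says that `y` is a proximal point `prox_{l f}(v)`, encoded through the
minimization property. -/
def IsProx {E : Type*} [SeminormedAddCommGroup E] (f : E → ℝ) (l : ℝ) (v y : E) : Prop :=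
  ∀ u, f y + (1 / (2 * l)) * ‖v - y‖ ^ 2 ≤ f u + (1 / (2 * l)) * ‖v - u‖ ^ 2

section Convexity

variable {H : Type*} [NormedAddCommGroup H] [InnerProductSpace ℝ H]

/-- `c`-cocoercivity (inverse strong monotonicity), the property of a gradient that makes its
forward steps nonexpansive. Firm nonexpansiveness is the case `c = 1`. -/
def IsCocoercive (c : ℝ) (A : H → H) : Prop :=
  ∀ x y, c * ‖A x - A y‖ ^ 2 ≤ ⟪A x - A y, x - y⟫

namespace IsCocoercive

variable {c : ℝ} {A : H → H}

theorem lipschitzWith (hA : IsCocoercive c A) (hc : 0 < c) : LipschitzWith (c⁻¹).toNNReal A := by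
  refine .of_dist_le' fun x y => ?_
  rw [dist_eq_norm, dist_eq_norm, ← div_eq_inv_mul, le_div_iff₀' hc]
  rcases (norm_nonneg (A x - A y)).eq_or_lt with h0 | hpos
  · simp [← h0]
  · refine le_of_mul_le_mul_right ?_ hpos
    calc c * ‖A x - A y‖ * ‖A x - A y‖ = c * ‖A x - A y‖ ^ 2 := by ring
      _ ≤ ⟪A x - A y, x - y⟫ := hA x y
      _ ≤ ‖x - y‖ * ‖A x - A y‖ := by rw [mul_comm]; exact real_inner_le_norm _ _

theorem lipschitzWith_one_sub_smul (hA : IsCocoercive c A) {l : ℝ} (hl0 : 0 ≤ l)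
    (hlc : l ≤ 2 * c) : LipschitzWith 1 fun x => x - l • A x := by
  refine lipschitzWith_iff_norm_sub_le.2 fun x y => ?_
  rw [NNReal.coe_one, one_mul]
  refine le_of_sq_le_sq ?_ (norm_nonneg _)
  have hsub : x - l • A x - (y - l • A y) = (x - y) - l • (A x - A y) := by module
  have hcoercive := mul_le_mul_of_nonneg_left (hA x y) hl0
  have hstep := mul_le_mul_of_nonneg_right hlc (mul_nonneg hl0 (sq_nonneg ‖A x - A y‖))
  rw [hsub, norm_sub_sq_real, real_inner_smul_right, norm_smul, Real.norm_of_nonneg hl0,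
    real_inner_comm]
  linarith

end IsCocoercive

section Gradient

variable [CompleteSpace H] {h : H → ℝ} {g : H → H}

theorem hasDerivAt_comp_lineMap {x y v : H} {t : ℝ}
    (hg : HasGradientAt h v (AffineMap.lineMap x y t)) :
    HasDerivAt (fun s : ℝ => h (AffineMap.lineMap x y s)) ⟪v, y - x⟫ t := by
  simpa [Function.comp_def] using
    hg.hasFDerivAt.comp_hasDerivAt t (AffineMap.hasDerivAt_lineMap (a := x) (b := y))

theorem add_inner_gradient_le_of_convexOn (hh : ConvexOn ℝ Set.univ h) {x v : H}
    (hv : HasGradientAt h v x) (y : H) : h x + ⟪v, y - x⟫ ≤ h y := by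
  have hline : ConvexOn ℝ Set.univ fun t : ℝ => h (AffineMap.lineMap x y t) := by
    simpa [Function.comp_def] using hh.comp_affineMap (AffineMap.lineMap x y : ℝ →ᵃ[ℝ] H)
  have hderiv : HasDerivAt (fun t : ℝ => h (AffineMap.lineMap x y t)) ⟪v, y - x⟫ 0 :=
    hasDerivAt_comp_lineMap (by rwa [AffineMap.lineMap_apply_zero])
  have hslope := hline.le_slope_of_hasDerivAt (Set.mem_univ 0) (Set.mem_univ 1) one_pos hderiv
  simp only [slope_def_field, AffineMap.lineMap_apply_one, AffineMap.lineMap_apply_zero,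
    sub_zero, div_one] at hslope
  linarith

theorem le_add_inner_gradient_add_sq {K : ℝ≥0} (hg : ∀ x, HasGradientAt h (g x) x)
    (hK : LipschitzWith K g) (x y : H) :
    h y ≤ h x + ⟪g x, y - x⟫ + K / 2 * ‖y - x‖ ^ 2 := by
  have hderiv (t : ℝ) := hasDerivAt_comp_lineMap (hg (AffineMap.lineMap x y t))
  have hmodel (t : ℝ) :
      HasDerivAt (fun s : ℝ => h x + s * ⟪g x, y - x⟫ + s ^ 2 * (K / 2 * ‖y - x‖ ^ 2))
        (⟪g x, y - x⟫ + t * (K * ‖y - x‖ ^ 2)) t := by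
    refine ((((hasDerivAt_id t).mul_const _).const_add (h x)).add
      ((hasDerivAt_pow 2 t).mul_const _)).congr_deriv ?_
    push_cast
    ring
  have hle : ∀ t ∈ Set.Ico (0 : ℝ) 1, ⟪g (AffineMap.lineMap x y t), y - x⟫ ≤
      ⟪g x, y - x⟫ + t * (K * ‖y - x‖ ^ 2) := fun t ht => by
    have hdist : ‖g (AffineMap.lineMap x y t) - g x‖ ≤ K * (t * ‖y - x‖) := by
      refine (hK.norm_sub_le _ _).trans_eq ?_
      rw [AffineMap.lineMap_apply_module', add_sub_cancel_right, norm_smul,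
        Real.norm_of_nonneg ht.1]
    calc ⟪g (AffineMap.lineMap x y t), y - x⟫
        = ⟪g x, y - x⟫ + ⟪g (AffineMap.lineMap x y t) - g x, y - x⟫ := by
          rw [inner_sub_left]; ring
      _ ≤ ⟪g x, y - x⟫ + K * (t * ‖y - x‖) * ‖y - x‖ := by
          gcongr
          exact (real_inner_le_norm _ _).trans (by gcongr)
      _ = ⟪g x, y - x⟫ + t * (K * ‖y - x‖ ^ 2) := by ring
  have hend := image_le_of_deriv_right_le_deriv_boundary
    (fun t _ => (hderiv t).continuousAt.continuousWithinAt)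
    (fun t _ => (hderiv t).hasDerivWithinAt) (by simp)
    (fun t _ => (hmodel t).continuousAt.continuousWithinAt)
    (fun t _ => (hmodel t).hasDerivWithinAt) hle (Set.right_mem_Icc.2 zero_le_one)
  simpa using hend

theorem add_inner_gradient_add_sq_le_of_convexOn {K : ℝ≥0}
    (hh : ConvexOn ℝ Set.univ h) (hg : ∀ x, HasGradientAt h (g x) x)
    (hK : LipschitzWith K g) (x y : H) :
    h x + ⟪g x, y - x⟫ + (K : ℝ)⁻¹ / 2 * ‖g y - g x‖ ^ 2 ≤ h y := by
  set v := g y - g x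
  -- One gradient step from `y` for the function `h - ⟪g x, ·⟫`, which is minimal at `x`.
  have hlower := add_inner_gradient_le_of_convexOn hh (hg x) (y - (K : ℝ)⁻¹ • v)
  have hupper := le_add_inner_gradient_add_sq hg hK y (y - (K : ℝ)⁻¹ • v)
  rw [sub_right_comm, inner_sub_right, real_inner_smul_right] at hlower
  rw [sub_sub_cancel_left, inner_neg_right, real_inner_smul_right, norm_neg, norm_smul, mul_pow,
    Real.norm_of_nonneg (by positivity)] at hupper
  have hv : (K : ℝ)⁻¹ * ⟪g y, v⟫ - (K : ℝ)⁻¹ * ⟪g x, v⟫ = (K : ℝ)⁻¹ * ‖v‖ ^ 2 := by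
    rw [← mul_sub, ← inner_sub_left, real_inner_self_eq_norm_sq]
  have hK_inv : (K : ℝ) / 2 * ((K : ℝ)⁻¹ ^ 2 * ‖v‖ ^ 2) = (K : ℝ)⁻¹ / 2 * ‖v‖ ^ 2 := by
    rcases eq_or_ne (K : ℝ) 0 with hK0 | hK0
    · simp [hK0]
    · field_simp
  linarith

/-- The Baillon–Haddad theorem. -/
theorem isCocoercive_gradient_of_convexOn {K : ℝ≥0}
    (hh : ConvexOn ℝ Set.univ h) (hg : ∀ x, HasGradientAt h (g x) x) (hK : LipschitzWith K g) :
    IsCocoercive (K : ℝ)⁻¹ g := fun x y => by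
  have hxy := add_inner_gradient_add_sq_le_of_convexOn hh hg hK x y
  have hyx := add_inner_gradient_add_sq_le_of_convexOn hh hg hK y x
  rw [norm_sub_rev, ← neg_sub x y, inner_neg_right] at hxy
  rw [inner_sub_left]
  linarith

end Gradient

namespace IsProx

variable {f : H → ℝ}

theorem inner_le (hf : ConvexOn ℝ Set.univ f) {l : ℝ} (hl : 0 < l) {v y : H}
    (hy : IsProx f l v y) (u : H) : ⟪v - y, u - y⟫ ≤ l * (f u - f y) := by
  have hsegment : ∀ t ∈ Set.Ioc (0 : ℝ) 1,
      ⟪v - y, u - y⟫ ≤ l * (f u - f y) + t * (‖u - y‖ ^ 2 / 2) := fun t ht => by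
    have hmin := hy (y + t • (u - y))
    have hconv := hf.2 (Set.mem_univ y) (Set.mem_univ u) (sub_nonneg.2 ht.2) ht.1.le (by ring)
    rw [show (1 - t) • y + t • u = y + t • (u - y) by module, smul_eq_mul, smul_eq_mul] at hconv
    rw [← sub_sub, norm_sub_sq_real (v - y), real_inner_smul_right, norm_smul,
      Real.norm_of_nonneg ht.1.le] at hmin
    have hscaled : (2 * l)⁻¹ * (2 * (t * ⟪v - y, u - y⟫) - (t * ‖u - y‖) ^ 2) ≤
        t * (f u - f y) := by
      rw [one_div] at hmin
      linarith
    rw [inv_mul_le_iff₀ (by positivity)] at hscaled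
    refine le_of_mul_le_mul_left ?_ ht.1
    linarith
  have hlim : Tendsto (fun t : ℝ => l * (f u - f y) + t * (‖u - y‖ ^ 2 / 2)) (𝓝[>] 0)
      (𝓝 (l * (f u - f y))) :=
    tendsto_nhdsWithin_of_tendsto_nhds
      ((by fun_prop : Continuous _).tendsto' 0 _ (by simp))
  exact ge_of_tendsto hlim (eventually_of_mem (Ioc_mem_nhdsGT one_pos) hsegment)

theorem norm_sub_le (hf : ConvexOn ℝ Set.univ f) {l₀ l₁ : ℝ} (hl₀ : 0 < l₀) (hl₁ : 0 < l₁)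
    {v₀ v₁ y₀ y₁ : H} (h₀ : IsProx f l₀ v₀ y₀) (h₁ : IsProx f l₁ v₁ y₁) :
    ‖y₁ - y₀‖ ≤ ‖v₁ - y₀ - (l₁ / l₀) • (v₀ - y₀)‖ := by
  have hvar₀ : l₁ / l₀ * ⟪v₀ - y₀, y₁ - y₀⟫ ≤ l₁ * (f y₁ - f y₀) := by
    rw [div_mul_eq_mul_div, div_le_iff₀ hl₀, mul_assoc, mul_comm _ l₀]
    exact mul_le_mul_of_nonneg_left (h₀.inner_le hf hl₀ y₁) hl₁.le
  have hvar₁ : ‖y₁ - y₀‖ ^ 2 - ⟪v₁ - y₀, y₁ - y₀⟫ ≤ l₁ * (f y₀ - f y₁) := by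
    refine (le_of_eq ?_).trans (h₁.inner_le hf hl₁ y₀)
    rw [← neg_sub y₁ y₀, inner_neg_right, ← sub_sub_sub_cancel_right v₁ y₁ y₀,
      inner_sub_left (v₁ - y₀), real_inner_self_eq_norm_sq, neg_sub]
  rcases (norm_nonneg (y₁ - y₀)).eq_or_lt with h0 | hpos
  · exact h0 ▸ norm_nonneg _
  · refine le_of_mul_le_mul_right ?_ hpos
    calc ‖y₁ - y₀‖ * ‖y₁ - y₀‖ ≤ ⟪v₁ - y₀ - (l₁ / l₀) • (v₀ - y₀), y₁ - y₀⟫ := by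
          rw [inner_sub_left, real_inner_smul_left]
          linarith
      _ ≤ ‖v₁ - y₀ - (l₁ / l₀) • (v₀ - y₀)‖ * ‖y₁ - y₀‖ := real_inner_le_norm _ _

theorem norm_sub_le_of_forward_step (hf : ConvexOn ℝ Set.univ f) {A : H → H} {l₀ l₁ : ℝ}
    (hl₀ : 0 < l₀) (hl₁ : 0 < l₁) (hA : LipschitzWith 1 fun z => z - l₁ • A z)
    {z₀ z₁ e₀ e₁ y₀ y₁ : H} (h₀ : IsProx f l₀ (z₀ + l₀ • (-A z₀ + e₀)) y₀)
    (h₁ : IsProx f l₁ (z₁ + l₁ • (-A z₁ + e₁)) y₁) :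
    ‖y₁ - y₀‖ ≤ ‖z₁ - z₀‖ + ‖l₁ • (e₁ - e₀)‖ + ‖(1 - l₁ / l₀) • (z₀ - y₀)‖ := by
  have hcancel (v : H) : (l₁ / l₀) • l₀ • v = l₁ • v := by
    rw [smul_smul, div_mul_cancel₀ _ hl₀.ne']
  calc ‖y₁ - y₀‖ ≤ _ := h₀.norm_sub_le hf hl₀ hl₁ h₁
    _ = ‖(z₁ - l₁ • A z₁ - (z₀ - l₁ • A z₀)) + l₁ • (e₁ - e₀) + (1 - l₁ / l₀) • (z₀ - y₀)‖ := by
        rw [add_sub_right_comm z₀, smul_add (l₁ / l₀), hcancel]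
        congr 1
        module
    _ ≤ _ := norm_add₃_le
    _ ≤ _ := by grw [hA.norm_sub_le z₁ z₀]; simp

end IsProx

end Convexity

/-- The conditions on the parameters of the algorithm under which its successive differences
vanish: `not_summable_alpha` is (C1), and the limits are, in order, (C2), (C3), (C5) and (C7). -/
structure IsAdmissible (θ lam β α : ℕ → ℝ) : Prop where
  theta_nonneg : ∀ n, 0 ≤ θ n
  theta_antitone : Antitone θ
  lam_pos : ∀ n, 0 < lam n
  beta_nonneg : ∀ n, 0 ≤ β n
  beta_antitone : Antitone β
  alpha_pos : ∀ n, 0 < α n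
  alpha_le_one : ∀ n, α n ≤ 1
  not_summable_alpha : ¬ Summable α
  tendsto_inv_lam_sub :
    Tendsto (fun n => (1 / α (n + 1)) * |1 / lam (n + 1) - 1 / lam n|) atTop (𝓝 0)
  tendsto_one_sub_alpha_div :
    Tendsto (fun n => (1 / lam (n + 1)) * |1 - α n / α (n + 1)|) atTop (𝓝 0)
  tendsto_theta_div : Tendsto (fun n => θ n / (α (n + 1) * lam (n + 1))) atTop (𝓝 0)
  tendsto_beta_div : Tendsto (fun n => β n / α (n + 1)) atTop (𝓝 0)

namespace IsAdmissible

variable {θ lam β α : ℕ → ℝ}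

theorem isBigO_theta (hp : IsAdmissible θ lam β α) : θ =O[atTop] fun _ => (1 : ℝ) :=
  .of_bound (θ 0) (.of_forall fun n => by
    rw [norm_one, mul_one, Real.norm_of_nonneg (hp.theta_nonneg n)]
    exact hp.theta_antitone n.zero_le)

theorem isBigO_alpha (hp : IsAdmissible θ lam β α) : α =O[atTop] fun _ => (1 : ℝ) :=
  .of_norm_le fun n => by
    rw [Real.norm_of_nonneg (hp.alpha_pos n).le]
    exact hp.alpha_le_one n

theorem isBigO_one_sub_alpha (hp : IsAdmissible θ lam β α) :
    (fun n => 1 - α n) =O[atTop] fun _ => (1 : ℝ) :=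
  (isBigO_refl _ _).sub hp.isBigO_alpha

theorem isLittleO_beta (hp : IsAdmissible θ lam β α) : β =o[atTop] fun n => α (n + 1) :=
  (isLittleO_iff_tendsto fun _ hn => absurd hn (hp.alpha_pos _).ne').2 hp.tendsto_beta_div

theorem tendsto_beta (hp : IsAdmissible θ lam β α) : Tendsto β atTop (𝓝 0) :=
  (isLittleO_one_iff ℝ).1
    (hp.isLittleO_beta.trans_isBigO (hp.isBigO_alpha.comp_tendsto (tendsto_add_atTop_nat 1)))

theorem isLittleO_inv_lam_sub (hp : IsAdmissible θ lam β α) :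
    (fun n => 1 / lam (n + 1) - 1 / lam n) =o[atTop] fun n => α (n + 1) :=
  isLittleO_of_tendsto_one_div_mul_abs (fun _ => hp.alpha_pos _) hp.tendsto_inv_lam_sub

theorem isLittleO_theta (hp : IsAdmissible θ lam β α) :
    θ =o[atTop] fun n => α (n + 1) * lam (n + 1) :=
  (isLittleO_iff_tendsto fun _ hn =>
    absurd hn (mul_pos (hp.alpha_pos _) (hp.lam_pos _)).ne').2 hp.tendsto_theta_div

theorem isLittleO_lam_mul_beta (hp : IsAdmissible θ lam β α) :
    (fun n => lam (n + 1) * β n) =o[atTop] fun n => α (n + 1) * lam (n + 1) := by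
  simpa only [mul_comm (α _)] using
    (isBigO_refl (fun n => lam (n + 1)) _).mul_isLittleO hp.isLittleO_beta

theorem isLittleO_one_sub_lam_div (hp : IsAdmissible θ lam β α) :
    (fun n => 1 - lam (n + 1) / lam n) =o[atTop] fun n => α (n + 1) * lam (n + 1) := by
  refine (hp.isLittleO_inv_lam_sub.mul_isBigO (isBigO_refl (fun n => lam (n + 1)) _)).congr_left
    fun n => ?_
  have := hp.lam_pos (n + 1)
  field_simp

theorem isLittleO_alpha_sub (hp : IsAdmissible θ lam β α) :
    (fun n => α n - α (n + 1)) =o[atTop] fun n => α (n + 1) * lam (n + 1) := by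
  have hratio : (fun n => 1 - α n / α (n + 1)) =o[atTop] fun n => lam (n + 1) :=
    isLittleO_of_tendsto_one_div_mul_abs (fun _ => hp.lam_pos _) hp.tendsto_one_sub_alpha_div
  refine ((isBigO_refl (fun n => α (n + 1)) _).mul_isLittleO hratio).neg_left.congr_left
    fun n => ?_
  have := hp.alpha_pos (n + 1)
  field_simp
  ring

theorem tendsto_div_lam_zero (hp : IsAdmissible θ lam β α) {r e : ℕ → ℝ} (hr0 : ∀ n, 0 ≤ r n)
    (hr : r =O[atTop] fun _ => (1 : ℝ))
    (he : e =o[atTop] fun n => α (n + 1) * lam (n + 1))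
    (hrec : ∀ᶠ n in atTop, r (n + 1) ≤ (1 - α (n + 1)) * r n + e n) :
    Tendsto (fun n => r n / lam n) atTop (𝓝 0) := by
  have hdrift : (fun n => (1 - α (n + 1)) * r n * (1 / lam (n + 1) - 1 / lam n)) =o[atTop]
      fun n => α (n + 1) := by
    have hα := hp.isBigO_one_sub_alpha.comp_tendsto (tendsto_add_atTop_nat 1)
    simpa using (hα.mul hr).mul_isLittleO hp.isLittleO_inv_lam_sub
  have he_div : (fun n => e n * (1 / lam (n + 1))) =o[atTop] fun n => α (n + 1) :=
    (he.mul_isBigO (isBigO_refl (fun n => 1 / lam (n + 1)) _)).congr_right fun n => by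
      rw [mul_assoc, mul_one_div_cancel (hp.lam_pos _).ne', mul_one]
  refine tendsto_zero_of_succ_le_one_sub_mul_add
    (fun n => div_nonneg (hr0 n) (hp.lam_pos n).le) (fun n => (hp.alpha_pos (n + 1)).le)
    (fun n => hp.alpha_le_one (n + 1)) (mt (summable_nat_add_iff 1).1 hp.not_summable_alpha)
    (hdrift.add he_div) ?_
  filter_upwards [hrec] with n hn
  calc r (n + 1) / lam (n + 1) ≤ ((1 - α (n + 1)) * r n + e n) / lam (n + 1) :=
        div_le_div_of_nonneg_right hn (hp.lam_pos _).le
    _ = _ := by ring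

end IsAdmissible

section Stage

variable {H : Type*} [NormedAddCommGroup H] [InnerProductSpace ℝ H]

/-- The inner recursion of the algorithm for one index `i`: it turns the sequence
`w = (w_n^{(i)})` into `w' = (w_n^{(i+1)})`, with an arbitrary operator `A` in place of `∇h_i`. -/
structure IsStage (f : H → ℝ) (A T : H → H) (u : H) (θ lam β α : ℕ → ℝ)
    (w z d y w' : ℕ → H) : Prop where
  extrapolate : ∀ n ≥ 1, z n = w n + θ n • (w n - w (n - 1))
  direction : ∀ n ≥ 1, d (n + 1) = -A (z n) + β n • d n
  prox : ∀ n ≥ 1, IsProx f (lam n) (z n + lam n • d (n + 1)) (y n)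
  relax : ∀ n ≥ 1, w' n = α n • u + (1 - α n) • T (y n)

namespace IsStage

variable {f : H → ℝ} {A T : H → H} {u : H} {θ lam β α : ℕ → ℝ} {w z d y w' : ℕ → H}

theorem isBigO_extrapolated (hs : IsStage f A T u θ lam β α w z d y w')
    (hθ : θ =O[atTop] fun _ => (1 : ℝ)) (hw : w =O[atTop] fun _ => (1 : ℝ)) :
    z =O[atTop] fun _ => (1 : ℝ) := by
  have hinertia : (fun n => θ n • (w n - w (n - 1))) =O[atTop] fun _ => (1 : ℝ) := by
    simpa using hθ.smul (hw.sub (hw.comp_tendsto (tendsto_sub_atTop_nat 1)))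
  exact EventuallyEq.trans_isBigO (eventually_atTop.2 ⟨1, hs.extrapolate⟩) (hw.add hinertia)

theorem isBigO_direction (hs : IsStage f A T u θ lam β α w z d y w') {K : ℝ≥0}
    (hA : LipschitzWith K A) (hβ : Tendsto β atTop (𝓝 0))
    (hz : z =O[atTop] fun _ => (1 : ℝ)) : d =O[atTop] fun _ => (1 : ℝ) := by
  obtain ⟨G, hG⟩ := (isBigO_one_comp_of_lipschitzWith hA hz).bound
  refine isBigO_one_of_norm_succ_le (G := G) (q := 1 / 2) (by norm_num) (by norm_num) ?_
  filter_upwards [hG, hβ.norm.eventually_le_const (u := 1 / 2) (by norm_num),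
    eventually_ge_atTop 1] with n hG hβ hn
  rw [norm_one, mul_one] at hG
  rw [hs.direction n hn]
  grw [norm_add_le, norm_neg, norm_smul, hG, hβ]

theorem isBigO_relaxed (hs : IsStage f A T u θ lam β α w z d y w') {K : ℝ≥0}
    (hT : LipschitzWith K T) (hα : α =O[atTop] fun _ => (1 : ℝ))
    (hy : y =O[atTop] fun _ => (1 : ℝ)) : w' =O[atTop] fun _ => (1 : ℝ) := by
  have hanchor : (fun n => α n • u) =O[atTop] fun _ => (1 : ℝ) := by
    simpa using hα.smul (isBigO_const_const u (one_ne_zero' ℝ) atTop)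
  have hmap : (fun n => (1 - α n) • T (y n)) =O[atTop] fun _ => (1 : ℝ) := by
    simpa using ((isBigO_refl _ _).sub hα).smul (isBigO_one_comp_of_lipschitzWith hT hy)
  exact EventuallyEq.trans_isBigO (eventually_atTop.2 ⟨1, hs.relax⟩) (hanchor.add hmap)

theorem norm_extrapolated_sub_le (hs : IsStage f A T u θ lam β α w z d y w') {n : ℕ}
    (hn : 1 ≤ n) : ‖z (n + 1) - z n‖ ≤
      ‖w (n + 1) - w n‖ + ‖θ (n + 1) • (w (n + 1) - w n)‖ + ‖θ n • (w n - w (n - 1))‖ := by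
  rw [hs.extrapolate (n + 1) n.succ_pos, hs.extrapolate n hn, Nat.add_sub_cancel,
    ← norm_neg (θ n • _)]
  refine (congrArg norm ?_).trans_le norm_add₃_le
  abel

theorem norm_prox_sub_le (hs : IsStage f A T u θ lam β α w z d y w')
    (hf : ConvexOn ℝ Set.univ f) (hlam : ∀ n, 0 < lam n) {n : ℕ} (hn : 1 ≤ n)
    (hA : LipschitzWith 1 fun v => v - lam (n + 1) • A v) :
    ‖y (n + 1) - y n‖ ≤ ‖z (n + 1) - z n‖ +
      ‖lam (n + 1) • (β (n + 1) • d (n + 1) - β n • d n)‖ +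
      ‖(1 - lam (n + 1) / lam n) • (z n - y n)‖ :=
  IsProx.norm_sub_le_of_forward_step hf (hlam n) (hlam (n + 1)) hA
    (hs.direction n hn ▸ hs.prox n hn)
    (hs.direction (n + 1) n.succ_pos ▸ hs.prox (n + 1) n.succ_pos)

theorem norm_relaxed_sub_le (hs : IsStage f A T u θ lam β α w z d y w') (hT : LipschitzWith 1 T)
    (hα : ∀ n, α n ≤ 1) {n : ℕ} (hn : 1 ≤ n) :
    ‖w' (n + 1) - w' n‖ ≤
      (1 - α (n + 1)) * ‖y (n + 1) - y n‖ + ‖(α n - α (n + 1)) • (T (y n) - u)‖ := by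
  have hsplit : w' (n + 1) - w' n =
      (1 - α (n + 1)) • (T (y (n + 1)) - T (y n)) + (α n - α (n + 1)) • (T (y n) - u) := by
    rw [hs.relax (n + 1) n.succ_pos, hs.relax n hn]
    module
  have hα' : 0 ≤ 1 - α (n + 1) := sub_nonneg.2 (hα (n + 1))
  have hTy : ‖T (y (n + 1)) - T (y n)‖ ≤ ‖y (n + 1) - y n‖ := by
    simpa using hT.norm_sub_le (y (n + 1)) (y n)
  rw [hsplit]
  grw [norm_add_le, norm_smul, Real.norm_of_nonneg hα', hTy]

theorem exists_isLittleO_norm_sub_le (hs : IsStage f A T u θ lam β α w z d y w')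
    (hp : IsAdmissible θ lam β α) (hf : ConvexOn ℝ Set.univ f) {c : ℝ} (hc : 0 < c)
    (hA : IsCocoercive c A) (hlam : ∀ᶠ n in atTop, lam n ≤ 2 * c) (hT : LipschitzWith 1 T)
    (hw : w =O[atTop] fun _ => (1 : ℝ)) (hy : y =O[atTop] fun _ => (1 : ℝ)) :
    ∃ e : ℕ → ℝ, e =o[atTop] (fun n => α (n + 1) * lam (n + 1)) ∧
      ∀ᶠ n in atTop, ‖w' (n + 1) - w' n‖ ≤ (1 - α (n + 1)) * ‖w (n + 1) - w n‖ + e n := by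
  have hz := hs.isBigO_extrapolated hp.isBigO_theta hw
  have hd := hs.isBigO_direction (hA.lipschitzWith hc) hp.tendsto_beta hz
  have hTu := (isBigO_one_comp_of_lipschitzWith hT hy).sub
    (isBigO_const_const u (one_ne_zero' ℝ) atTop)
  have hw_succ := hw.comp_tendsto (tendsto_add_atTop_nat 1)
  have hw_pred := hw.comp_tendsto (tendsto_sub_atTop_nat 1)
  have hθ_succ := (isBigO_succ_of_antitone hp.theta_nonneg hp.theta_antitone).trans_isLittleO
    hp.isLittleO_theta
  have hmomentum : (fun n => ‖lam (n + 1) • (β (n + 1) • d (n + 1) - β n • d n)‖) =o[atTop]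
      fun n => α (n + 1) * lam (n + 1) := by
    have hβd : (fun n => β (n + 1) • d (n + 1) - β n • d n) =O[atTop] β := by
      simpa using ((isBigO_succ_of_antitone hp.beta_nonneg hp.beta_antitone).smul
        (hd.comp_tendsto (tendsto_add_atTop_nat 1))).sub ((isBigO_refl β atTop).smul hd)
    exact (((isBigO_refl (fun n => lam (n + 1)) atTop).smul hβd).trans_isLittleO
      hp.isLittleO_lam_mul_beta).norm_left
  refine ⟨_, (((isLittleO_norm_smul hθ_succ (hw_succ.sub hw)).add
    (isLittleO_norm_smul hp.isLittleO_theta (hw.sub hw_pred))).add (hmomentum.add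
    (isLittleO_norm_smul hp.isLittleO_one_sub_lam_div (hz.sub hy)))).add
    (isLittleO_norm_smul hp.isLittleO_alpha_sub hTu), ?_⟩
  filter_upwards [eventually_ge_atTop 1, (tendsto_add_atTop_nat 1).eventually hlam] with n hn hlam
  have hz_sub := hs.norm_extrapolated_sub_le hn
  have hy_sub := hs.norm_prox_sub_le hf hp.lam_pos hn
    (hA.lipschitzWith_one_sub_smul (hp.lam_pos _).le hlam)
  have hα0 : 0 ≤ 1 - α (n + 1) := sub_nonneg.2 (hp.alpha_le_one (n + 1))
  have hα1 : 1 - α (n + 1) ≤ 1 := sub_le_self 1 (hp.alpha_pos (n + 1)).le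
  set E := ‖θ (n + 1) • (w (n + 1) - w n)‖ + ‖θ n • (w n - w (n - 1))‖ +
    (‖lam (n + 1) • (β (n + 1) • d (n + 1) - β n • d n)‖ +
      ‖(1 - lam (n + 1) / lam n) • (z n - y n)‖)
  have hE : 0 ≤ E := by positivity
  calc ‖w' (n + 1) - w' n‖
      ≤ (1 - α (n + 1)) * ‖y (n + 1) - y n‖ + ‖(α n - α (n + 1)) • (T (y n) - u)‖ :=
        hs.norm_relaxed_sub_le hT hp.alpha_le_one hn
    _ ≤ (1 - α (n + 1)) * (‖w (n + 1) - w n‖ + E) + ‖(α n - α (n + 1)) • (T (y n) - u)‖ := by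
        gcongr
        linarith
    _ ≤ (1 - α (n + 1)) * ‖w (n + 1) - w n‖ + (E + ‖(α n - α (n + 1)) • (T (y n) - u)‖) := by
        linarith [mul_le_of_le_one_left hE hα1]

end IsStage

end Stage

theorem alg1_successive_differences_tendsto_zero_general
    {H : Type*} [NormedAddCommGroup H] [InnerProductSpace ℝ H] {M : ℕ} (hM : 1 ≤ M)
    {f : ℕ → H → ℝ} {A T : ℕ → H → H} {L θ lam β α : ℕ → ℝ} {x : ℕ → H} {w z d y : ℕ → ℕ → H}
    {u : ℕ → H}
    (hf : ∀ i ∈ Icc 1 M, ConvexOn ℝ Set.univ (f i)) (hL : ∀ i ∈ Icc 1 M, 0 < L i)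
    (hA : ∀ i ∈ Icc 1 M, IsCocoercive (L i) (A i)) (hT : ∀ i ∈ Icc 1 M, LipschitzWith 1 (T i))
    (hp : IsAdmissible θ lam β α) (hlam : ∀ i ∈ Icc 1 M, ∀ᶠ n in atTop, lam n ≤ 2 * L i)
    (hw1 : ∀ n ≥ 1, w n 1 = x n) (hx : ∀ n ≥ 1, x (n + 1) = w n (M + 1))
    (hs : ∀ i ∈ Icc 1 M, IsStage (f i) (A i) (T i) (u i) θ lam β α
      (w · i) (z · i) (d · i) (y · i) (w · (i + 1)))
    (hy : ∀ i ∈ Icc 1 M, (y · i) =O[atTop] fun _ => (1 : ℝ)) :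
    Tendsto (fun n => ‖x (n + 1) - x n‖ / lam n) atTop (𝓝 0) ∧
      Tendsto (fun n => ‖x (n + 1) - x n‖) atTop (𝓝 0) := by
  have hw_succ : ∀ i ∈ Icc 1 M, (w · (i + 1)) =O[atTop] fun _ => (1 : ℝ) := fun i hi =>
    (hs i hi).isBigO_relaxed (hT i hi) hp.isBigO_alpha (hy i hi)
  have hx_bdd : x =O[atTop] fun _ => (1 : ℝ) := by
    rw [← map_add_atTop_eq_nat 1, isBigO_map]
    exact EventuallyEq.trans_isBigO (eventually_atTop.2 ⟨1, hx⟩) (hw_succ M (by simp [hM]))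
  have hw : ∀ i ∈ Icc 1 M, (w · i) =O[atTop] fun _ => (1 : ℝ)
    | 0, hi => by simp at hi
    | 1, _ => EventuallyEq.trans_isBigO (eventually_atTop.2 ⟨1, hw1⟩) hx_bdd
    | i + 2, hi => hw_succ (i + 1) (by simp only [mem_Icc] at hi ⊢; omega)
  obtain ⟨e, he, hcycle⟩ := exists_isLittleO_le_of_forall_step hM
    (D := fun i n => ‖w (n + 1) i - w n i‖) (fun _ _ => norm_nonneg _)
    (fun n => sub_le_self 1 (hp.alpha_pos (n + 1)).le) fun i hi =>
      (hs i hi).exists_isLittleO_norm_sub_le hp (hf i hi) (hL i hi) (hA i hi) (hlam i hi)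
        (hT i hi) (hw i hi) (hy i hi)
  have hdiv : Tendsto (fun n => ‖x (n + 1) - x n‖ / lam n) atTop (𝓝 0) := by
    refine hp.tendsto_div_lam_zero (fun _ => norm_nonneg _)
      ((hx_bdd.comp_tendsto (tendsto_add_atTop_nat 1)).sub hx_bdd).norm_left he ?_
    filter_upwards [hcycle, eventually_ge_atTop 1] with n hn hn1
    rwa [← hx n hn1, ← hx (n + 1) n.succ_pos, hw1 n hn1, hw1 (n + 1) n.succ_pos] at hn
  refine ⟨hdiv, ?_⟩
  have hlam_bdd : IsBoundedUnder (· ≤ ·) atTop fun n => ‖lam n‖ :=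
    isBoundedUnder_of_eventually_le ((hlam 1 (by simp [hM])).mono fun n hn => by
      rwa [Real.norm_of_nonneg (hp.lam_pos n).le])
  exact (hdiv.zero_mul_isBoundedUnder_le hlam_bdd).congr fun n =>
    div_mul_cancel₀ _ (hp.lam_pos n).ne'

theorem alg1_successive_differences_tendsto_zero
    {H : Type*} [NormedAddCommGroup H] [InnerProductSpace ℝ H] [CompleteSpace H]
    (M : ℕ) (hM : 1 ≤ M)
    (f h : ℕ → H → ℝ) (h' : ℕ → H → H) (L : ℕ → ℝ) (T : ℕ → H → H)
    (hf_cont : ∀ i ∈ Finset.Icc 1 M, Continuous (f i))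
    (hf_conv : ∀ i ∈ Finset.Icc 1 M, ConvexOn ℝ Set.univ (f i))
    (hh_conv : ∀ i ∈ Finset.Icc 1 M, ConvexOn ℝ Set.univ (h i))
    (hh_grad : ∀ i ∈ Finset.Icc 1 M, ∀ x : H, HasGradientAt (h i) (h' i x) x)
    (hL_pos : ∀ i ∈ Finset.Icc 1 M, 0 < L i)
    (hh_lip : ∀ i ∈ Finset.Icc 1 M, ∀ x y : H, ‖h' i x - h' i y‖ ≤ (1 / L i) * ‖x - y‖)
    (hT_firm : ∀ i ∈ Finset.Icc 1 M, ∀ x y : H,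
      ‖T i x - T i y‖ ^ 2 ≤ @inner ℝ H _ (T i x - T i y) (x - y))
    (S : Set H) (hS : S = ⋂ i ∈ Finset.Icc 1 M, {x : H | T i x = x}) (hS_ne : S.Nonempty)
    (θ lam β α : ℕ → ℝ) (σ : ℝ) (hσ : 1 ≤ σ)
    (hθ_range : ∀ n, 0 ≤ θ n ∧ θ n < 1)
    (hlam_pos : ∀ n, 0 < lam n)
    (hlam_le : ∀ n, ∀ i ∈ Finset.Icc 1 M, lam n ≤ 2 * L i)
    (hβ_range : ∀ n, 0 < β n ∧ β n ≤ 1)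
    (hα_range : ∀ n, 0 < α n ∧ α n ≤ 1)
    (hθ_anti : Antitone θ) (hlam_anti : Antitone lam)
    (hβ_anti : Antitone β) (hα_anti : Antitone α)
    (hθ_lim : Tendsto θ atTop (𝓝 0)) (hlam_lim : Tendsto lam atTop (𝓝 0))
    (hβ_lim : Tendsto β atTop (𝓝 0)) (hα_lim : Tendsto α atTop (𝓝 0))
    (hC1 : ¬ Summable α)
    (hC2 : Tendsto (fun n => (1 / α (n+1)) * |1 / lam (n+1) - 1 / lam n|) atTop (𝓝 0))
    (hC3 : Tendsto (fun n => (1 / lam (n+1)) * |1 - α n / α (n+1)|) atTop (𝓝 0))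
    (hC4 : Tendsto (fun n => α n / lam n) atTop (𝓝 0))
    (hC5 : Tendsto (fun n => θ n / (α (n+1) * lam (n+1))) atTop (𝓝 0))
    (hC6 : ∀ n, lam n / lam (n+1) ≤ σ)
    (hC7 : Tendsto (fun n => β n / α (n+1)) atTop (𝓝 0))
    (x : ℕ → H) (w z y d : ℕ → ℕ → H) (u : ℕ → H)
    (hd1 : ∀ i ∈ Finset.Icc 1 M, d 1 i = -(h' i (z 0 i)))
    (hw1 : ∀ n ≥ 1, w n 1 = x n)
    (hz : ∀ n ≥ 1, ∀ i ∈ Finset.Icc 1 M, z n i = w n i + θ n • (w n i - w (n-1) i))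
    (hd : ∀ n ≥ 1, ∀ i ∈ Finset.Icc 1 M, d (n+1) i = -(h' i (z n i)) + β n • d n i)
    (hy : ∀ n ≥ 1, ∀ i ∈ Finset.Icc 1 M, ∀ v : H,
      f i (y n i) + (1 / (2 * lam n)) * ‖z n i + lam n • d (n+1) i - y n i‖ ^ 2
        ≤ f i v + (1 / (2 * lam n)) * ‖z n i + lam n • d (n+1) i - v‖ ^ 2)
    (hw : ∀ n ≥ 1, ∀ i ∈ Finset.Icc 1 M,
      w n (i+1) = α n • u i + (1 - α n) • T i (y n i))
    (hx : ∀ n ≥ 1, x (n+1) = w n (M+1))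
    (hy_bdd : ∀ i ∈ Finset.Icc 1 M, ∃ C, ∀ n ≥ 1, ‖y n i‖ ≤ C)
    : Tendsto (fun n => ‖x (n+1) - x n‖ / lam n) atTop (𝓝 0) ∧
      Tendsto (fun n => ‖x (n+1) - x n‖) atTop (𝓝 0) := by
  have hA : ∀ i ∈ Icc 1 M, IsCocoercive (L i) (h' i) := fun i hi => by
    have hlip : LipschitzWith (1 / L i).toNNReal (h' i) :=
      .of_dist_le' (by simpa only [dist_eq_norm] using hh_lip i hi)
    simpa [(hL_pos i hi).le] using
      isCocoercive_gradient_of_convexOn (hh_conv i hi) (hh_grad i hi) hlip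
  have hT : ∀ i ∈ Icc 1 M, LipschitzWith 1 (T i) := fun i hi => by
    have hfirm : IsCocoercive 1 (T i) := by simpa [IsCocoercive] using hT_firm i hi
    simpa using hfirm.lipschitzWith one_pos
  have hp : IsAdmissible θ lam β α :=
    ⟨fun n => (hθ_range n).1, hθ_anti, hlam_pos, fun n => (hβ_range n).1.le, hβ_anti,
      fun n => (hα_range n).1, fun n => (hα_range n).2, hC1, hC2, hC3, hC5, hC7⟩
  have hy_bigO : ∀ i ∈ Icc 1 M, (y · i) =O[atTop] fun _ => (1 : ℝ) := fun i hi =>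
    let ⟨C, hC⟩ := hy_bdd i hi
    .of_bound C (eventually_atTop.2 ⟨1, by simpa using hC⟩)
  exact alg1_successive_differences_tendsto_zero_general hM hf_conv hL_pos hA hT hp
    (fun i hi => .of_forall (hlam_le · i hi)) hw1 hx
    (fun i hi => ⟨(hz · · i hi), (hd · · i hi), (hy · · i hi), (hw · · i hi)⟩) hy_bigO
end

section
/- For every x̄ ∈ S and every i ∈ I, there exist constants Q₁ ≥ 0 and Q₂ ≥ 0 such that for all n ≥ 1, ‖w_n^{(i+1)} − x̄‖² ≤ ‖w_n^{(i)} − x̄‖² + θ_n·Q₁ + α_n·Q₂ − (1 − α_n)·‖T_i(y_n^{(i)}) − y_n^{(i)}‖² − ‖z_n^{(i)} − y_n^{(i)}‖² + 2λ_n·(f_i(x̄) − f_i(y_n^{(i)})) + 2λ_n·⟨d_{n+1}^{(i)}, y_n^{(i)} − x̄⟩, where the sequences are generated by Algorithm 1. -/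
open Filter Topology

/-!
The objective defining a proximal point is strongly convex, so it grows quadratically away from its
minimizer; this is the three-point inequality, and pulling the direction `d` out of the proximal
center `z + λ d` produces the inner product term. Convexity of `‖·‖ ^ 2` splits the anchored step
`α u + (1 - α) T y` and, since `w + θ (w - w') = (1 - θ) w + θ (2 w - w')`, also the inertial step.
All that remains is to bound `‖2 w_n - w_{n-1} - x̄‖` uniformly in `n`: a firmly quasinonexpansive
map brings no point farther from its fixed point `x̄`, so every block output stays bounded because
the `y_n` are, and from `n = 2` on every block input is an earlier block output.
-/

section KeyInequality

open scoped RealInnerProductSpace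

section NormSq

variable {E : Type*} [SeminormedAddCommGroup E] [NormedSpace ℝ E]

theorem convexOn_norm_sq : ConvexOn ℝ Set.univ fun x : E ↦ ‖x‖ ^ 2 :=
  convexOn_univ_norm.pow (fun _ _ ↦ norm_nonneg _) 2

theorem norm_sq_convexCombination_le (x y : E) {t : ℝ} (ht : t ∈ Set.Icc 0 1) :
    ‖t • x + (1 - t) • y‖ ^ 2 ≤ t * ‖x‖ ^ 2 + (1 - t) * ‖y‖ ^ 2 :=
  convexOn_norm_sq.2 (Set.mem_univ x) (Set.mem_univ y) ht.1 (sub_nonneg.2 ht.2)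
    (add_sub_cancel t 1)

theorem norm_add_smul_sub_sub_sq_le (w w' p : E) {θ : ℝ} (hθ : θ ∈ Set.Icc 0 1) :
    ‖w + θ • (w - w') - p‖ ^ 2 ≤ ‖w - p‖ ^ 2 + θ * ‖(2 : ℝ) • w - w' - p‖ ^ 2 := by
  have hcombination :
      w + θ • (w - w') - p = θ • ((2 : ℝ) • w - w' - p) + (1 - θ) • (w - p) := by module
  calc ‖w + θ • (w - w') - p‖ ^ 2
      ≤ θ * ‖(2 : ℝ) • w - w' - p‖ ^ 2 + (1 - θ) * ‖w - p‖ ^ 2 := by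
        rw [hcombination]
        exact norm_sq_convexCombination_le _ _ hθ
    _ ≤ ‖w - p‖ ^ 2 + θ * ‖(2 : ℝ) • w - w' - p‖ ^ 2 := by
        linarith [mul_nonneg hθ.1 (sq_nonneg ‖w - p‖)]

end NormSq

theorem modulus_le_sub_of_uniformConvexOn_of_isMinOn {E : Type*} [NormedAddCommGroup E]
    [NormedSpace ℝ E] {s : Set E} {φ : ℝ → ℝ} {F : E → ℝ} (hF : UniformConvexOn s φ F) {p q : E}
    (hmin : IsMinOn F s p) (hp : p ∈ s) (hq : q ∈ s) :
    φ ‖p - q‖ ≤ F q - F p := by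
  have hsegment : ∀ t ∈ Set.Ioo (0 : ℝ) 1, (1 - t) * φ ‖p - q‖ ≤ F q - F p := by
    rintro t ⟨ht₀, ht₁⟩
    have hle : F p ≤ F ((1 - t) • p + t • q) :=
      hmin (hF.1 hp hq (sub_nonneg.2 ht₁.le) ht₀.le (sub_add_cancel 1 t))
    have hconv := hF.2 hp hq (sub_nonneg.2 ht₁.le) ht₀.le (sub_add_cancel 1 t)
    simp only [smul_eq_mul] at hconv
    refine le_of_mul_le_mul_left ?_ ht₀
    linarith
  have hlim : Tendsto (fun t : ℝ ↦ (1 - t) * φ ‖p - q‖) (𝓝[>] 0) (𝓝 (φ ‖p - q‖)) :=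
    (Continuous.tendsto' (by fun_prop) 0 _ (by simp)).mono_left nhdsWithin_le_nhds
  exact le_of_tendsto hlim (mem_of_superset (Ioo_mem_nhdsGT one_pos) hsegment)

theorem exists_norm_le_of_cyclic {E : Type*} [SeminormedAddCommGroup E] {M : ℕ} {w : ℕ → ℕ → E}
    (hw_next : ∀ n ≥ 1, w (n + 1) 1 = w n (M + 1))
    (hw_bdd : ∀ i ∈ Finset.Icc 1 M, ∃ C, ∀ n ≥ 1, ‖w n (i + 1)‖ ≤ C) :
    ∀ i ∈ Finset.Icc 1 M, ∃ C, ∀ n, ‖w n i‖ ≤ C := by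
  intro i hi
  obtain ⟨hi₁, hiM⟩ := Finset.mem_Icc.1 hi
  obtain ⟨C, hC⟩ : ∃ C, ∀ n ≥ 2, ‖w n i‖ ≤ C := by
    rcases hi₁.eq_or_lt with rfl | hi₁
    · obtain ⟨C, hC⟩ := hw_bdd M (Finset.mem_Icc.2 ⟨hiM, le_rfl⟩)
      refine ⟨C, fun n hn ↦ ?_⟩
      obtain ⟨m, rfl⟩ := Nat.exists_eq_add_of_le' (one_le_two.trans hn)
      rw [hw_next m (by omega)]
      exact hC m (by omega)
    · obtain ⟨j, rfl⟩ := Nat.exists_eq_add_of_le' hi₁.le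
      obtain ⟨C, hC⟩ := hw_bdd j (Finset.mem_Icc.2 ⟨by omega, by omega⟩)
      exact ⟨C, fun n hn ↦ hC n (one_le_two.trans hn)⟩
  have heventually : IsBoundedUnder (· ≤ ·) atTop fun n ↦ ‖w n i‖ :=
    isBoundedUnder_of_eventually_le ((eventually_ge_atTop 2).mono hC)
  obtain ⟨B, hB⟩ := heventually.bddAbove_range
  exact ⟨B, fun n ↦ hB (Set.mem_range_self n)⟩

variable {H : Type*} [NormedAddCommGroup H] [InnerProductSpace ℝ H]

section Proximal

/-- `p` is a proximal point at `v` of the function equal to `f` on `s` and to `+∞` outside `s`, with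
parameter `l`: a proper extended-valued function is encoded by its effective domain `s` and its
restriction to `s`. -/
def IsProxOn (f : H → ℝ) (s : Set H) (l : ℝ) (v p : H) : Prop :=
  p ∈ s ∧ IsMinOn (fun u ↦ f u + 1 / (2 * l) * ‖v - u‖ ^ 2) s p

theorem strongConvexOn_mul_norm_sub_sq {s : Set H} (hs : Convex ℝ s) (m : ℝ) (v : H) :
    StrongConvexOn s m fun u ↦ m / 2 * ‖v - u‖ ^ 2 := by
  rw [strongConvexOn_iff_convex]
  have haffine : (fun u ↦ m / 2 * ‖v - u‖ ^ 2 - m / 2 * ‖u‖ ^ 2) =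
      fun u ↦ (-m • innerₗ H v) u + m / 2 * ‖v‖ ^ 2 := by
    ext u
    simp only [norm_sub_sq_real, LinearMap.smul_apply, innerₗ_apply_apply, smul_eq_mul]
    ring
  rw [haffine]
  exact ((-m • innerₗ H v).convexOn hs).add_const _

theorem strongConvexOn_add_mul_norm_sub_sq {s : Set H} {f : H → ℝ} (hf : ConvexOn ℝ s f)
    (m : ℝ) (v : H) : StrongConvexOn s m fun u ↦ f u + m / 2 * ‖v - u‖ ^ 2 := by
  simpa [StrongConvexOn, Pi.add_def] using
    hf.uniformConvexOn_zero.add (strongConvexOn_mul_norm_sub_sq hf.1 m v)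

namespace IsProxOn

variable {f : H → ℝ} {s : Set H} {l : ℝ} {v p q : H}

theorem norm_sub_sq_le (hp : IsProxOn f s l v p) (hf : ConvexOn ℝ s f) (hl : 0 < l)
    (hq : q ∈ s) :
    ‖p - q‖ ^ 2 ≤ ‖v - q‖ ^ 2 - ‖v - p‖ ^ 2 + 2 * l * (f q - f p) := by
  have hm : 1 / l / 2 = 1 / (2 * l) := by rw [div_div, mul_comm]
  have hstrong := strongConvexOn_add_mul_norm_sub_sq hf (1 / l) v
  simp only [hm] at hstrong
  have hgrowth := modulus_le_sub_of_uniformConvexOn_of_isMinOn hstrong hp.2 hp.1 hq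
  simp only [hm] at hgrowth
  field_simp at hgrowth
  linarith

theorem norm_sub_sq_le_of_add_smul {z d : H} (hp : IsProxOn f s l (z + l • d) p)
    (hf : ConvexOn ℝ s f) (hl : 0 < l) (hq : q ∈ s) :
    ‖p - q‖ ^ 2 ≤
      ‖z - q‖ ^ 2 - ‖z - p‖ ^ 2 + 2 * l * (f q - f p) + 2 * l * ⟪d, p - q⟫ := by
  have hexpand : ∀ a, ‖z + l • d - a‖ ^ 2 = ‖z - a‖ ^ 2 + 2 * l * ⟪d, z - a⟫ + ‖l • d‖ ^ 2 := by
    intro a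
    rw [add_sub_right_comm, norm_add_sq_real, inner_smul_right, real_inner_comm]
    ring
  have hinner : ⟪d, p - q⟫ = ⟪d, z - q⟫ - ⟪d, z - p⟫ := by
    rw [← inner_sub_right, sub_sub_sub_cancel_left]
  have hthree := hp.norm_sub_sq_le hf hl hq
  rw [hexpand, hexpand] at hthree
  rw [hinner]
  linarith

end IsProxOn

end Proximal

section Firm

/-- Firm nonexpansiveness, the class of operators to which metric projections and proximal maps
belong. -/
def FirmlyNonexpansive (T : H → H) : Prop :=
  ∀ x y, ‖T x - T y‖ ^ 2 ≤ ⟪T x - T y, x - y⟫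

/-- Firm quasinonexpansiveness: the consequence of firm nonexpansiveness obtained by comparing only
with fixed points. It is stated without inner products, so it makes sense in any normed space. -/
def FirmlyQuasinonexpansive {E : Type*} [SeminormedAddCommGroup E] (T : E → E) : Prop :=
  ∀ x p, Function.IsFixedPt T p → ‖T x - p‖ ^ 2 + ‖T x - x‖ ^ 2 ≤ ‖x - p‖ ^ 2

theorem FirmlyNonexpansive.firmlyQuasinonexpansive {T : H → H} (hT : FirmlyNonexpansive T) :
    FirmlyQuasinonexpansive T := by
  intro x p hp
  have hfirm := hT x p
  rw [hp.eq] at hfirm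
  rw [← sub_sub_sub_cancel_right (T x) x p, norm_sub_sq_real (T x - p) (x - p)]
  linarith

namespace FirmlyQuasinonexpansive

variable {E : Type*} [SeminormedAddCommGroup E] {T : E → E} {p : E}

theorem norm_map_sub_le (hT : FirmlyQuasinonexpansive T) (hp : Function.IsFixedPt T p) (x : E) :
    ‖T x - p‖ ≤ ‖x - p‖ :=
  le_of_sq_le_sq ((le_add_of_nonneg_right (sq_nonneg _)).trans (hT x p hp)) (norm_nonneg _)

variable [NormedSpace ℝ E] {α : ℝ}

theorem norm_convexCombination_sub_le_max (hT : FirmlyQuasinonexpansive T)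
    (hp : Function.IsFixedPt T p) (hα : α ∈ Set.Icc 0 1) (u y : E) :
    ‖α • u + (1 - α) • T y - p‖ ≤ max ‖u - p‖ ‖y - p‖ := by
  have hu : u ∈ Metric.closedBall p (max ‖u - p‖ ‖y - p‖) :=
    mem_closedBall_iff_norm.2 (le_max_left _ _)
  have hTy : T y ∈ Metric.closedBall p (max ‖u - p‖ ‖y - p‖) :=
    mem_closedBall_iff_norm.2 ((hT.norm_map_sub_le hp y).trans (le_max_right _ _))
  exact mem_closedBall_iff_norm.1 <|
    convex_closedBall p _ hu hTy hα.1 (sub_nonneg.2 hα.2) (add_sub_cancel α 1)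

theorem exists_norm_convexCombination_le (hT : FirmlyQuasinonexpansive T)
    (hp : Function.IsFixedPt T p) (u : E) (C : ℝ) :
    ∃ B, ∀ α ∈ Set.Icc (0 : ℝ) 1, ∀ y, ‖y‖ ≤ C → ‖α • u + (1 - α) • T y‖ ≤ B := by
  refine ⟨max ‖u - p‖ (C + ‖p‖) + ‖p‖, fun α hα y hy ↦ ?_⟩
  calc ‖α • u + (1 - α) • T y‖
      ≤ ‖α • u + (1 - α) • T y - p‖ + ‖p‖ := norm_le_norm_sub_add _ _
    _ ≤ max ‖u - p‖ ‖y - p‖ + ‖p‖ := by grw [hT.norm_convexCombination_sub_le_max hp hα u y]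
    _ ≤ max ‖u - p‖ (C + ‖p‖) + ‖p‖ := by grw [norm_sub_le y p, hy]

theorem norm_convexCombination_sub_sq_le (hT : FirmlyQuasinonexpansive T)
    (hp : Function.IsFixedPt T p) (hα : α ∈ Set.Icc 0 1) (u y : E) :
    ‖α • u + (1 - α) • T y - p‖ ^ 2 ≤
      α * ‖u - p‖ ^ 2 + ‖y - p‖ ^ 2 - (1 - α) * ‖T y - y‖ ^ 2 := by
  have hcombination : α • u + (1 - α) • T y - p = α • (u - p) + (1 - α) • (T y - p) := by module
  calc ‖α • u + (1 - α) • T y - p‖ ^ 2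
      ≤ α * ‖u - p‖ ^ 2 + (1 - α) * ‖T y - p‖ ^ 2 := by
        rw [hcombination]
        exact norm_sq_convexCombination_le _ _ hα
    _ ≤ α * ‖u - p‖ ^ 2 + (1 - α) * (‖y - p‖ ^ 2 - ‖T y - y‖ ^ 2) := by
        have hα' : 0 ≤ 1 - α := sub_nonneg.2 hα.2
        gcongr
        exact le_sub_iff_add_le.2 (hT y p hp)
    _ ≤ α * ‖u - p‖ ^ 2 + ‖y - p‖ ^ 2 - (1 - α) * ‖T y - y‖ ^ 2 := by
        linarith [mul_nonneg hα.1 (sq_nonneg ‖y - p‖)]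

end FirmlyQuasinonexpansive

end Firm

theorem norm_sub_sq_inertial_prox_anchored_step_le {f : H → ℝ} {s : Set H} {T : H → H}
    {l θ α : ℝ} {w w' z d y u p : H} (hf : ConvexOn ℝ s f) (hT : FirmlyQuasinonexpansive T)
    (hl : 0 < l) (hθ : θ ∈ Set.Icc 0 1) (hα : α ∈ Set.Icc 0 1)
    (hz : z = w + θ • (w - w')) (hy : IsProxOn f s l (z + l • d) y)
    (hps : p ∈ s) (hp : Function.IsFixedPt T p) :
    ‖α • u + (1 - α) • T y - p‖ ^ 2 ≤
      ‖w - p‖ ^ 2 + θ * ‖(2 : ℝ) • w - w' - p‖ ^ 2 + α * ‖u - p‖ ^ 2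
        - (1 - α) * ‖T y - y‖ ^ 2 - ‖z - y‖ ^ 2
        + 2 * l * (f p - f y) + 2 * l * ⟪d, y - p⟫ := by
  have hanchor := hT.norm_convexCombination_sub_sq_le hp hα u y
  have hprox := hy.norm_sub_sq_le_of_add_smul hf hl hps
  have hinertial := norm_add_smul_sub_sub_sq_le w w' p hθ
  rw [← hz] at hinertial
  linarith

theorem alg1_key_inequality_general {M : ℕ} {f : ℕ → H → ℝ} {D : ℕ → Set H} {T : ℕ → H → H}
    (hf_conv : ∀ i ∈ Finset.Icc 1 M, ConvexOn ℝ (D i) (f i))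
    (hT : ∀ i ∈ Finset.Icc 1 M, FirmlyQuasinonexpansive (T i))
    {θ lam α : ℕ → ℝ} (hθ : ∀ n, θ n ∈ Set.Icc 0 1) (hlam : ∀ n, 0 < lam n)
    (hα : ∀ n, α n ∈ Set.Icc 0 1) {w z y d : ℕ → ℕ → H} {u : ℕ → H}
    (hz : ∀ n ≥ 1, ∀ i ∈ Finset.Icc 1 M, z n i = w n i + θ n • (w n i - w (n - 1) i))
    (hy : ∀ n ≥ 1, ∀ i ∈ Finset.Icc 1 M,
      IsProxOn (f i) (D i) (lam n) (z n i + lam n • d (n + 1) i) (y n i))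
    (hw : ∀ n ≥ 1, ∀ i ∈ Finset.Icc 1 M, w n (i + 1) = α n • u i + (1 - α n) • T i (y n i))
    (hw_next : ∀ n ≥ 1, w (n + 1) 1 = w n (M + 1))
    (hy_bdd : ∀ i ∈ Finset.Icc 1 M, ∃ C, ∀ n ≥ 1, ‖y n i‖ ≤ C) :
    ∀ p ∈ ⋂ i ∈ Finset.Icc 1 M, Function.fixedPoints (T i), ∀ i ∈ Finset.Icc 1 M, p ∈ D i →
      ∃ Q₁ ≥ (0 : ℝ), ∃ Q₂ ≥ (0 : ℝ), ∀ n ≥ 1,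
        ‖w n (i + 1) - p‖ ^ 2 ≤ ‖w n i - p‖ ^ 2 + θ n * Q₁ + α n * Q₂
          - (1 - α n) * ‖T i (y n i) - y n i‖ ^ 2 - ‖z n i - y n i‖ ^ 2
          + 2 * lam n * (f i p - f i (y n i)) + 2 * lam n * ⟪d (n + 1) i, y n i - p⟫ := by
  intro p hp i hi hpD
  have hfix : ∀ j ∈ Finset.Icc 1 M, Function.IsFixedPt (T j) p :=
    fun j hj ↦ Set.mem_iInter₂.1 hp j hj
  have hw_bdd : ∀ j ∈ Finset.Icc 1 M, ∃ C, ∀ n ≥ 1, ‖w n (j + 1)‖ ≤ C := by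
    intro j hj
    obtain ⟨C, hC⟩ := hy_bdd j hj
    obtain ⟨B, hB⟩ := (hT j hj).exists_norm_convexCombination_le (hfix j hj) (u j) C
    exact ⟨B, fun n hn ↦ hw n hn j hj ▸ hB (α n) (hα n) (y n j) (hC n hn)⟩
  obtain ⟨C, hC⟩ := exists_norm_le_of_cyclic hw_next hw_bdd i hi
  have hextrapolated : ∀ n, ‖(2 : ℝ) • w n i - w (n - 1) i - p‖ ≤ 2 * C + C + ‖p‖ := by
    intro n
    grw [norm_sub_le, norm_sub_le, norm_smul, hC n, hC (n - 1), Real.norm_two]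
  refine ⟨(2 * C + C + ‖p‖) ^ 2, sq_nonneg _, ‖u i - p‖ ^ 2, sq_nonneg _, fun n hn ↦ ?_⟩
  rw [hw n hn i hi]
  grw [norm_sub_sq_inertial_prox_anchored_step_le (hf_conv i hi) (hT i hi) (hlam n) (hθ n) (hα n)
    (hz n hn i hi) (hy n hn i hi) hpD (hfix i hi), hextrapolated n]
  exact (hθ n).1

end KeyInequality

theorem alg1_key_inequality
    {H : Type*} [NormedAddCommGroup H] [InnerProductSpace ℝ H] [CompleteSpace H]
    (M : ℕ) (hM : 1 ≤ M)
    (f h : ℕ → H → ℝ) (h' : ℕ → H → H) (L : ℕ → ℝ) (T : ℕ → H → H)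
    (hf_cont : ∀ i ∈ Finset.Icc 1 M, Continuous (f i))
    (hf_conv : ∀ i ∈ Finset.Icc 1 M, ConvexOn ℝ Set.univ (f i))
    (hh_conv : ∀ i ∈ Finset.Icc 1 M, ConvexOn ℝ Set.univ (h i))
    (hh_grad : ∀ i ∈ Finset.Icc 1 M, ∀ x : H, HasGradientAt (h i) (h' i x) x)
    (hL_pos : ∀ i ∈ Finset.Icc 1 M, 0 < L i)
    (hh_lip : ∀ i ∈ Finset.Icc 1 M, ∀ x y : H, ‖h' i x - h' i y‖ ≤ (1 / L i) * ‖x - y‖)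
    (hT_firm : ∀ i ∈ Finset.Icc 1 M, ∀ x y : H,
      ‖T i x - T i y‖ ^ 2 ≤ @inner ℝ H _ (T i x - T i y) (x - y))
    (S : Set H) (hS : S = ⋂ i ∈ Finset.Icc 1 M, {x : H | T i x = x}) (hS_ne : S.Nonempty)
    (θ lam β α : ℕ → ℝ) (σ : ℝ) (hσ : 1 ≤ σ)
    (hθ_range : ∀ n, 0 ≤ θ n ∧ θ n < 1)
    (hlam_pos : ∀ n, 0 < lam n)
    (hlam_le : ∀ n, ∀ i ∈ Finset.Icc 1 M, lam n ≤ 2 * L i)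
    (hβ_range : ∀ n, 0 < β n ∧ β n ≤ 1)
    (hα_range : ∀ n, 0 < α n ∧ α n ≤ 1)
    (hθ_anti : Antitone θ) (hlam_anti : Antitone lam)
    (hβ_anti : Antitone β) (hα_anti : Antitone α)
    (hθ_lim : Tendsto θ atTop (𝓝 0)) (hlam_lim : Tendsto lam atTop (𝓝 0))
    (hβ_lim : Tendsto β atTop (𝓝 0)) (hα_lim : Tendsto α atTop (𝓝 0))
    (hC1 : ¬ Summable α)
    (hC2 : Tendsto (fun n => (1 / α (n+1)) * |1 / lam (n+1) - 1 / lam n|) atTop (𝓝 0))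
    (hC3 : Tendsto (fun n => (1 / lam (n+1)) * |1 - α n / α (n+1)|) atTop (𝓝 0))
    (hC4 : Tendsto (fun n => α n / lam n) atTop (𝓝 0))
    (hC5 : Tendsto (fun n => θ n / (α (n+1) * lam (n+1))) atTop (𝓝 0))
    (hC6 : ∀ n, lam n / lam (n+1) ≤ σ)
    (hC7 : Tendsto (fun n => β n / α (n+1)) atTop (𝓝 0))
    (x : ℕ → H) (w z y d : ℕ → ℕ → H) (u : ℕ → H)
    (hd1 : ∀ i ∈ Finset.Icc 1 M, d 1 i = -(h' i (z 0 i)))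
    (hw1 : ∀ n ≥ 1, w n 1 = x n)
    (hz : ∀ n ≥ 1, ∀ i ∈ Finset.Icc 1 M, z n i = w n i + θ n • (w n i - w (n-1) i))
    (hd : ∀ n ≥ 1, ∀ i ∈ Finset.Icc 1 M, d (n+1) i = -(h' i (z n i)) + β n • d n i)
    (hy : ∀ n ≥ 1, ∀ i ∈ Finset.Icc 1 M, ∀ v : H,
      f i (y n i) + (1 / (2 * lam n)) * ‖z n i + lam n • d (n+1) i - y n i‖ ^ 2
        ≤ f i v + (1 / (2 * lam n)) * ‖z n i + lam n • d (n+1) i - v‖ ^ 2)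
    (hw : ∀ n ≥ 1, ∀ i ∈ Finset.Icc 1 M,
      w n (i+1) = α n • u i + (1 - α n) • T i (y n i))
    (hx : ∀ n ≥ 1, x (n+1) = w n (M+1))
    (hy_bdd : ∀ i ∈ Finset.Icc 1 M, ∃ C, ∀ n ≥ 1, ‖y n i‖ ≤ C)
    : ∀ xb ∈ S, ∀ i ∈ Finset.Icc 1 M, ∃ Q₁ ≥ (0:ℝ), ∃ Q₂ ≥ (0:ℝ), ∀ n ≥ 1,
      ‖w n (i+1) - xb‖ ^ 2 ≤ ‖w n i - xb‖ ^ 2 + θ n * Q₁ + α n * Q₂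
        - (1 - α n) * ‖T i (y n i) - y n i‖ ^ 2 - ‖z n i - y n i‖ ^ 2
        + 2 * lam n * (f i xb - f i (y n i))
        + 2 * lam n * @inner ℝ H _ (d (n+1) i) (y n i - xb) := by
  subst hS
  intro xb hxb i hi
  exact alg1_key_inequality_general (D := fun _ ↦ Set.univ) hf_conv
    (fun j hj ↦ FirmlyNonexpansive.firmlyQuasinonexpansive (hT_firm j hj))
    (fun n ↦ ⟨(hθ_range n).1, (hθ_range n).2.le⟩) hlam_pos
    (fun n ↦ ⟨(hα_range n).1.le, (hα_range n).2⟩) hz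
    (fun n hn j hj ↦ ⟨Set.mem_univ _, fun v _ ↦ hy n hn j hj v⟩) hw
    (fun n hn ↦ (hw1 (n + 1) (Nat.le_add_left 1 n)).trans (hx n hn)) hy_bdd xb hxb i hi
    (Set.mem_univ xb)
end
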